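/- arXiv:2203.14687 — 3 statements merged into one kernel-verified Lean document; each statement's English description precedes it below -/
import Mathlib

section
/- Let q = p^h be a prime power and let a_0, …, a_{h−1}, b_0, …, b_{h−1} ∈ F_q. Then the following are equivalent: (1) the only solution (L,M) ∈ F_q^2 of L^2 + Σ_{i=0}^{h−1} a_i M^{p^i+1} + M·Σ_{j=0}^{h−1} b_j L^{p^j} = 0 is L = M = 0; (2) for every (ℓ_0, m_0) ∈ F_q^2 with (ℓ_0,m_0) ≠ (0,0), the only x ∈ F_q satisfying Σ_{j=0}^{h−1} b_j m_0 ℓ_0^{p^j} x^{p^j} + Σ_{i=0}^{h−1} a_i m_0^{p^i+1} x^{p^i} + ℓ_0^2 x = 0 is x = 0. -/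
/-!
The polynomial in `x` of condition (2), multiplied by `x`, is the form of condition (1) evaluated at
`(ℓ₀ x, m₀ x)`. So a nonzero root `x` for a pair `(ℓ₀, m₀) ≠ (0, 0)` gives the nonzero zero
`(ℓ₀ x, m₀ x)` of the form, and a nonzero zero of the form gives the root `x = 1`.
-/

lemma forall_eq_zero_iff_forall_root_eq_zero {R : Type*} [MonoidWithZero R] [NoZeroDivisors R]
    {Q : R → R → R} {P : R → R → R → R}
    (hQP : ∀ l m x, Q (l * x) (m * x) = x * P l m x) :
    (∀ L M, Q L M = 0 → L = 0 ∧ M = 0) ↔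
      ∀ l m, (l, m) ≠ (0, 0) → ∀ x, P l m x = 0 → x = 0 := by
  constructor
  · intro hQ l m hlm x hx
    by_contra hx0
    obtain ⟨hl, hm⟩ : l * x = 0 ∧ m * x = 0 := hQ _ _ (by rw [hQP, hx, mul_zero])
    exact hlm (Prod.ext (eq_zero_of_ne_zero_of_mul_right_eq_zero hx0 hl)
      (eq_zero_of_ne_zero_of_mul_right_eq_zero hx0 hm))
  · intro hP L M hLM
    have root_one : P L M 1 = 0 := by simpa only [mul_one, one_mul, hLM] using (hQP L M 1).symm
    by_contra hne
    have one_eq_zero : (1 : R) = 0 := hP L M (fun h ↦ hne (Prod.mk.inj h)) 1 root_one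
    exact hne ⟨eq_zero_of_zero_eq_one one_eq_zero.symm L, eq_zero_of_zero_eq_one one_eq_zero.symm M⟩

section CommSemiring

variable {R ι κ : Type*} [CommSemiring R]

lemma sum_mul_mul_pow_succ (s : Finset ι) (d : ι → ℕ) (a : ι → R) (m x : R) :
    ∑ i ∈ s, a i * (m * x) ^ (d i + 1) = x * ∑ i ∈ s, a i * m ^ (d i + 1) * x ^ d i := by
  rw [Finset.mul_sum]
  exact Finset.sum_congr rfl fun i _ ↦ by ring

lemma mul_mul_sum_mul_mul_pow (t : Finset κ) (e : κ → ℕ) (b : κ → R) (l m x : R) :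
    m * x * ∑ j ∈ t, b j * (l * x) ^ e j = x * ∑ j ∈ t, b j * m * l ^ e j * x ^ e j := by
  rw [Finset.mul_sum, Finset.mul_sum]
  exact Finset.sum_congr rfl fun j _ ↦ by ring

theorem statement12_general [NoZeroDivisors R] (s : Finset ι) (t : Finset κ)
    (d : ι → ℕ) (e : κ → ℕ) (a : ι → R) (b : κ → R) :
    (∀ L M : R,
        L ^ 2 + ∑ i ∈ s, a i * M ^ (d i + 1) + M * ∑ j ∈ t, b j * L ^ e j = 0 →
          L = 0 ∧ M = 0) ↔
      ∀ l m : R, (l, m) ≠ (0, 0) → ∀ x : R,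
        ∑ j ∈ t, b j * m * l ^ e j * x ^ e j
          + ∑ i ∈ s, a i * m ^ (d i + 1) * x ^ d i + l ^ 2 * x = 0 → x = 0 :=
  forall_eq_zero_iff_forall_root_eq_zero fun l m x ↦ by
    rw [sum_mul_mul_pow_succ, mul_mul_sum_mul_mul_pow]
    ring

end CommSemiring

/-- Over `F_q`, `q = p^h`, the following are equivalent: (1) the only solution of
`L² + Σ_i a_i M^{p^i+1} + M·Σ_j b_j L^{p^j} = 0` is `L = M = 0`; (2) for every
`(ℓ₀,m₀) ≠ (0,0)`, the only solution of
`Σ_j b_j m₀ ℓ₀^{p^j} x^{p^j} + Σ_i a_i m₀^{p^i+1} x^{p^i} + ℓ₀² x = 0` is `x = 0`. -/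
theorem statement12 (p h : ℕ) (hp : p.Prime) (hh : 0 < h)
    (K : Type*) [Field K] [Fintype K] (hcard : Fintype.card K = p ^ h)
    (a b : ℕ → K) :
    (∀ L M : K,
        L ^ 2 + ∑ i ∈ Finset.range h, a i * M ^ (p ^ i + 1)
          + M * ∑ j ∈ Finset.range h, b j * L ^ p ^ j = 0 → L = 0 ∧ M = 0)
      ↔ (∀ ℓ₀ m₀ : K, (ℓ₀, m₀) ≠ (0, 0) → ∀ x : K,
          ∑ j ∈ Finset.range h, b j * m₀ * ℓ₀ ^ p ^ j * x ^ p ^ j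
            + ∑ i ∈ Finset.range h, a i * m₀ ^ (p ^ i + 1) * x ^ p ^ i
            + ℓ₀ ^ 2 * x = 0 → x = 0) :=
  statement12_general (Finset.range h) (Finset.range h) (p ^ ·) (p ^ ·) a b
end

section
/- Let q = p^h be a prime power and let f(x,y) = Σ_{i=0}^{h−1} a_i x^{p^i} + Σ_{j=0}^{h−1} b_j y^{p^j} with a_i, b_j ∈ F_q. Then O_4(f) is an ovoid of Q(4,q) (equivalently, f satisfies the ovoid condition) if and only if for every (ℓ_0, m_0) ∈ F_q^2 with (ℓ_0,m_0) ≠ (0,0), the map x ↦ Σ_{j=0}^{h−1} b_j m_0 ℓ_0^{p^j} x^{p^j} + Σ_{i=0}^{h−1} a_i m_0^{p^i+1} x^{p^i} + ℓ_0^2 x is a bijection of F_q (i.e., a permutation polynomial of F_q). -/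
/-!
For additive `f` the ovoid condition only involves differences, so it says that the form
`y ^ 2 + x * f (x, y)` has no zero other than `(0, 0)`. On the line of multiples of `(m, l)` this
form is `t` times the additive map `t ↦ m * f (m * t, l * t) + l ^ 2 * t`, so it has no nonzero zero
there exactly when this additive map has trivial kernel, that is, when it is injective.
-/

/-- The ovoid condition on a function `f` of two variables. Over a finite field it says that the
points `(1, x, y, f x y, -y ^ 2 - x * f x y)` together with `(0, 0, 0, 0, 1)` form an ovoid of the
quadric `X₀ * X₄ + X₁ * X₃ + X₂ ^ 2 = 0`. -/
def OvoidCondition {R : Type*} [Ring R] (f : R → R → R) : Prop :=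
  ∀ x₁ y₁ x₂ y₂ : R, (x₁, y₁) ≠ (x₂, y₂) →
    (y₁ - y₂) ^ 2 + (x₁ - x₂) * (f x₁ y₁ - f x₂ y₂) ≠ 0

theorem ovoidCondition_iff_forall_ne_zero {R : Type*} [Ring R] (φ : R × R →+ R) :
    OvoidCondition (fun x y => φ (x, y)) ↔
      ∀ x y : R, (x, y) ≠ (0, 0) → y ^ 2 + x * φ (x, y) ≠ 0 := by
  constructor
  · intro hφ x y hxy
    have hφ₀ : φ (0, 0) = 0 := map_zero φ
    simpa only [sub_zero, hφ₀] using hφ x y 0 0 hxy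
  · intro hφ x₁ y₁ x₂ y₂ hne
    have hdiff : (x₁ - x₂, y₁ - y₂) ≠ (0, 0) := sub_ne_zero.mpr hne
    simpa only [← map_sub, Prod.mk_sub_mk] using hφ _ _ hdiff

/-- The quotient by `t` of the form `y ^ 2 + x * φ (x, y)` restricted to the line of points
`(x, y) = (m * t, l * t)`, as an additive map in `t`. -/
def directionMap {R : Type*} [Semiring R] (φ : R × R →+ R) (l m : R) : R →+ R :=
  (AddMonoidHom.mulLeft m).comp (φ.comp ((AddMonoidHom.mulLeft m).prod (AddMonoidHom.mulLeft l))) +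
    AddMonoidHom.mulLeft (l ^ 2)

theorem directionMap_apply {R : Type*} [Semiring R] (φ : R × R →+ R) (l m t : R) :
    directionMap φ l m t = m * φ (m * t, l * t) + l ^ 2 * t :=
  rfl

theorem mul_directionMap {R : Type*} [CommSemiring R] (φ : R × R →+ R) (l m t : R) :
    t * directionMap φ l m t = (l * t) ^ 2 + m * t * φ (m * t, l * t) := by
  rw [directionMap_apply]
  ring

theorem ovoidCondition_iff_injective_directionMap {R : Type*} [CommRing R] [IsDomain R]
    (φ : R × R →+ R) :
    OvoidCondition (fun x y => φ (x, y)) ↔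
      ∀ l m : R, (l, m) ≠ (0, 0) → Function.Injective (directionMap φ l m) := by
  simp only [ovoidCondition_iff_forall_ne_zero, injective_iff_map_eq_zero]
  constructor
  · intro hφ l m hlm t hker
    by_contra ht
    have hpoint : (m * t, l * t) ≠ (0, 0) := by
      simpa [ht, and_comm] using hlm
    exact hφ _ _ hpoint (by rw [← mul_directionMap, hker, mul_zero])
  · intro hinj x y hxy hzero
    have hyx : (y, x) ≠ (0, 0) := Prod.swap_injective.ne hxy
    have hker : directionMap φ y x 1 = 0 := by
      simpa only [mul_one, one_mul, hzero] using mul_directionMap φ y x 1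
    exact one_ne_zero (hinj y x hyx 1 hker)

/-- The additive map induced by the linearized polynomial with coefficients `c i` at `X ^ p ^ i`,
for `i ∈ s`. -/
def linearizedMap {R : Type*} [CommSemiring R] (p : ℕ) [ExpChar R p] (s : Finset ℕ) (c : ℕ → R) :
    R →+ R :=
  ∑ i ∈ s, (AddMonoidHom.mulLeft (c i)).comp (iterateFrobenius R p i : R →+ R)

theorem linearizedMap_apply {R : Type*} [CommSemiring R] (p : ℕ) [ExpChar R p] (s : Finset ℕ)
    (c : ℕ → R) (x : R) : linearizedMap p s c x = ∑ i ∈ s, c i * x ^ p ^ i := by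
  simp [linearizedMap, iterateFrobenius_def]

theorem directionMap_coprod_linearizedMap {R : Type*} [CommSemiring R] (p : ℕ) [ExpChar R p]
    (s t : Finset ℕ) (a b : ℕ → R) (l m x : R) :
    directionMap ((linearizedMap p s a).coprod (linearizedMap p t b)) l m x =
      ∑ j ∈ t, b j * m * l ^ p ^ j * x ^ p ^ j + ∑ i ∈ s, a i * m ^ (p ^ i + 1) * x ^ p ^ i +
        l ^ 2 * x := by
  have hy : m * linearizedMap p t b (l * x) = ∑ j ∈ t, b j * m * l ^ p ^ j * x ^ p ^ j := by
    rw [linearizedMap_apply, Finset.mul_sum]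
    exact Finset.sum_congr rfl fun j _ => by ring
  have hx : m * linearizedMap p s a (m * x) = ∑ i ∈ s, a i * m ^ (p ^ i + 1) * x ^ p ^ i := by
    rw [linearizedMap_apply, Finset.mul_sum]
    exact Finset.sum_congr rfl fun i _ => by ring
  rw [directionMap_apply, AddMonoidHom.coprod_apply, mul_add, hy, hx, add_comm (∑ i ∈ s, _)]

theorem expChar_of_card_eq_prime_pow {R : Type*} [CommRing R] [IsDomain R] [Fintype R] {p n : ℕ}
    (hp : p.Prime) (hcard : Fintype.card R = p ^ n) : ExpChar R p :=
  have : Fact p.Prime := ⟨hp⟩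
  have : CharP R p := charP_of_card_eq_prime_pow hcard
  .prime hp

theorem statement13_general {R : Type*} [CommRing R] [IsDomain R] (p : ℕ) [ExpChar R p]
    (s t : Finset ℕ) (a b : ℕ → R) (f : R → R → R)
    (hf : ∀ x y : R, f x y = ∑ i ∈ s, a i * x ^ p ^ i + ∑ j ∈ t, b j * y ^ p ^ j) :
    OvoidCondition f ↔ ∀ l m : R, (l, m) ≠ (0, 0) →
      Function.Injective (fun x : R =>
        ∑ j ∈ t, b j * m * l ^ p ^ j * x ^ p ^ j
          + ∑ i ∈ s, a i * m ^ (p ^ i + 1) * x ^ p ^ i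
          + l ^ 2 * x) := by
  let φ : R × R →+ R := (linearizedMap p s a).coprod (linearizedMap p t b)
  have hfφ : f = fun x y => φ (x, y) := by
    ext x y
    rw [hf, AddMonoidHom.coprod_apply, linearizedMap_apply, linearizedMap_apply]
  rw [hfφ, ovoidCondition_iff_injective_directionMap]
  simp only [← directionMap_coprod_linearizedMap, φ]

/-- For `f(x,y) = Σ_i a_i x^{p^i} + Σ_j b_j y^{p^j}` over `F_q`, `q = p^h`: `O_4(f)` is an ovoid
of `Q(4,q)` (i.e. `f` satisfies the ovoid condition) iff for every `(ℓ₀,m₀) ≠ (0,0)` the map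
`x ↦ Σ_j b_j m₀ ℓ₀^{p^j} x^{p^j} + Σ_i a_i m₀^{p^i+1} x^{p^i} + ℓ₀² x` is a bijection of `F_q`
(a permutation polynomial of `F_q`). -/
theorem statement13 (p h : ℕ) (hp : p.Prime) (hh : 0 < h)
    (K : Type*) [Field K] [Fintype K] (hcard : Fintype.card K = p ^ h)
    (a b : ℕ → K)
    (f : K → K → K)
    (hf : ∀ x y : K, f x y =
      ∑ i ∈ Finset.range h, a i * x ^ p ^ i + ∑ j ∈ Finset.range h, b j * y ^ p ^ j) :
    (∀ x₁ y₁ x₂ y₂ : K, (x₁, y₁) ≠ (x₂, y₂) →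
        (y₁ - y₂) ^ 2 + (x₁ - x₂) * (f x₁ y₁ - f x₂ y₂) ≠ 0)
      ↔ (∀ ℓ₀ m₀ : K, (ℓ₀, m₀) ≠ (0, 0) →
          Function.Bijective (fun x : K =>
            ∑ j ∈ Finset.range h, b j * m₀ * ℓ₀ ^ p ^ j * x ^ p ^ j
              + ∑ i ∈ Finset.range h, a i * m₀ ^ (p ^ i + 1) * x ^ p ^ i
              + ℓ₀ ^ 2 * x)) := by
  have : ExpChar K p := expChar_of_card_eq_prime_pow hp hcard
  simpa only [OvoidCondition, Finite.injective_iff_bijective] using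
    statement13_general p (Finset.range h) (Finset.range h) a b f hf
end

section
/- Let q = 3^5 and let F_q be the finite field with 3^5 = 243 elements. For every pair (ℓ_0, m_0) ∈ F_q^2 with (ℓ_0, m_0) ≠ (0,0), the map x ↦ m_0 ℓ_0^{81} x^{81} + m_0^{10} x^{9} − ℓ_0^2 x is a bijection of F_q; that is, m_0 ℓ_0^{81} X^{81} + m_0^{10} X^{9} − ℓ_0^2 X is an F_3-linearized permutation polynomial of F_{3^5}. -/
/-!
Let `aᵢ` denote the `i`-th Frobenius conjugate `a ^ 3 ^ i` of an element `a` of the field with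
`3 ^ 5` elements. If `m₀ ≠ 0`, a nonzero root of the polynomial yields, after rescaling, elements
`y` and `d` with `y ^ 6 = y + d` and `d ^ 11 = 1`. Here `y ^ 4` is both `y₂ - d y₁` and
`(y₄ + d₄) ^ 2`, which turns the first equation into the linear one
`y₂ - y₃ - d y₁ + d₄ y₄ = d₃ + d₄ ^ 2`.

The operator on the left is skew-adjoint for the trace form `Tr (x y)`. In the coordinates
`y₀, …, y₄` it is a skew-symmetric matrix of odd size, hence singular, and its sub-Pfaffians give
the kernel element `w = d₁ d₃ + d₂ - 1`. Therefore `Tr (w (d₃ + d₄ ^ 2)) = 0`. When `d ^ 11 = 1`,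
however, this trace equals `Tr d + Tr (d ^ 2) = d + d ^ 2 + ⋯ + d ^ 10`, which is not zero.
-/

section SkewOperator

variable {R : Type*} [CommRing R]

/-- The additive operator `y ↦ y₂ - y₃ - d y₁ + d₄ y₄`, where `aᵢ = a ^ 3 ^ i`. On the field with
`3 ^ 5` elements it is skew-adjoint for the trace form. -/
def skewOperator (d y : R) : R :=
  y ^ 9 - y ^ 27 - d * y ^ 3 + d ^ 81 * y ^ 81

/-- The kernel element `d₁ d₃ + d₂ - 1` of `skewOperator d`, where `aᵢ = a ^ 3 ^ i`: one of the
`4 × 4` sub-Pfaffians of the skew-symmetric matrix of that operator, the others being its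
conjugates. -/
def skewPfaffian (d : R) : R :=
  d ^ 30 + d ^ 9 - 1

variable [CharP R 3]

theorem skewPfaffian_pow_three_pow (d : R) (n : ℕ) :
    skewPfaffian d ^ 3 ^ n = skewPfaffian (d ^ 3 ^ n) := by
  have : Fact (Nat.Prime 3) := ⟨Nat.prime_three⟩
  rw [skewPfaffian, sub_pow_char_pow, add_pow_char_pow, one_pow, pow_right_comm,
    pow_right_comm d 9, skewPfaffian]

theorem skewOperator_skewPfaffian {d : R} (hd : d ^ 243 = d) :
    skewOperator d (skewPfaffian d) = 0 := by
  have conj₁ : skewPfaffian d ^ 3 = d ^ 9 * d ^ 81 + d ^ 27 - 1 := by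
    rw [show 3 = 3 ^ 1 from rfl, skewPfaffian_pow_three_pow, skewPfaffian]; ring
  have conj₂ : skewPfaffian d ^ 9 = d ^ 27 * d ^ 243 + d ^ 81 - 1 := by
    rw [show 9 = 3 ^ 2 from rfl, skewPfaffian_pow_three_pow, skewPfaffian]; ring
  have conj₃ : skewPfaffian d ^ 27 = d ^ 81 * (d ^ 243) ^ 3 + d ^ 243 - 1 := by
    rw [show 27 = 3 ^ 3 from rfl, skewPfaffian_pow_three_pow, skewPfaffian]; ring
  have conj₄ : skewPfaffian d ^ 81 = d ^ 243 * (d ^ 243) ^ 9 + (d ^ 243) ^ 3 - 1 := by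
    rw [show 81 = 3 ^ 4 from rfl, skewPfaffian_pow_three_pow, skewPfaffian]; ring
  rw [skewOperator, conj₁, conj₂, conj₃, conj₄, hd]
  ring

theorem skewOperator_eq_of_pow_six_eq {d y : R} (hy : y ^ 243 = y) (h : y ^ 6 = y + d) :
    skewOperator d y = d ^ 27 + d ^ 162 := by
  have : Fact (Nat.Prime 3) := ⟨Nat.prime_three⟩
  have three_eq_zero : (3 : R) = 0 := CharP.cast_eq_zero R 3
  have conj₃ : y ^ 162 = y ^ 27 + d ^ 27 := by
    calc y ^ 162 = (y ^ 6) ^ 3 ^ 3 := by ring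
      _ = y ^ 27 + d ^ 27 := by rw [h, add_pow_char_pow]; rfl
  have conj₄ : y ^ 2 = y ^ 81 + d ^ 81 := by
    calc y ^ 2 = (y ^ 243) ^ 2 := by rw [hy]
      _ = (y ^ 6) ^ 3 ^ 4 := by ring
      _ = y ^ 81 + d ^ 81 := by rw [h, add_pow_char_pow]; rfl
  have pow_four : y ^ 4 = y ^ 27 + d ^ 27 + 2 * d ^ 81 * y ^ 81 + d ^ 162 := by
    calc y ^ 4 = (y ^ 2) ^ 2 := by ring
      _ = y ^ 162 + 2 * d ^ 81 * y ^ 81 + d ^ 162 := by rw [conj₄]; ring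
      _ = y ^ 27 + d ^ 27 + 2 * d ^ 81 * y ^ 81 + d ^ 162 := by rw [conj₃]
  have pow_nine : y ^ 9 = y ^ 4 + d * y ^ 3 := by linear_combination y ^ 3 * h
  rw [skewOperator]
  linear_combination pow_nine + pow_four + d ^ 81 * y ^ 81 * three_eq_zero

end SkewOperator

section Trace

variable {F L : Type*} [Field F] [Field L] [Finite L] [Algebra F L]

theorem pow_card_pow_finrank (x : L) : x ^ Nat.card F ^ Module.finrank F L = x := by
  have := Fintype.ofFinite L
  rw [← Module.natCard_eq_pow_finrank, Nat.card_eq_fintype_card, FiniteField.pow_card]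

theorem trace_pow_card (x : L) :
    Algebra.trace F L (x ^ Nat.card F) = Algebra.trace F L x := by
  have := Finite.of_injective _ (algebraMap F L).injective
  have := Fintype.ofFinite F
  rw [Nat.card_eq_fintype_card]
  exact Algebra.trace_eq_of_algEquiv (FiniteField.frobeniusAlgEquivOfAlgebraic F L) x

theorem trace_pow_card_pow (x : L) (n : ℕ) :
    Algebra.trace F L (x ^ Nat.card F ^ n) = Algebra.trace F L x := by
  induction n with
  | zero => rw [pow_zero, pow_one]
  | succ n ih => rw [pow_succ, pow_mul, trace_pow_card, ih]

theorem trace_mul_pow_card_pow {m n : ℕ} (hmn : Module.finrank F L = m + n) (x y : L) :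
    Algebra.trace F L (x * y ^ Nat.card F ^ m) = Algebra.trace F L (x ^ Nat.card F ^ n * y) := by
  rw [← trace_pow_card_pow _ n, mul_pow, ← pow_mul, ← pow_add, ← hmn, pow_card_pow_finrank]

end Trace

section QuinticExtension

variable {K : Type*} [Field K] [Finite K] [Algebra (ZMod 3) K]

local notation "Tr" => Algebra.trace (ZMod 3) K

theorem pow_eq_self_of_finrank_eq_five (hK : Module.finrank (ZMod 3) K = 5) (a : K) :
    a ^ 243 = a := by
  simpa [hK] using pow_card_pow_finrank (F := ZMod 3) a

theorem trace_mul_skewOperator (hK : Module.finrank (ZMod 3) K = 5) (d x y : K) :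
    Tr (x * skewOperator d y) = -Tr (skewOperator d x * y) := by
  have adjoint {m n : ℕ} (hmn : m + n = 5) (a : K) :
      Tr (a * y ^ 3 ^ m) = Tr (a ^ 3 ^ n * y) := by
    simpa using trace_mul_pow_card_pow (F := ZMod 3) (hK.trans hmn.symm) a y
  have adjoint₁ : Tr (x * d * y ^ 3) = Tr (d ^ 81 * x ^ 81 * y) := by
    rw [← mul_pow, mul_comm d x]; exact adjoint (m := 1) (n := 4) rfl _
  have adjoint₂ : Tr (x * y ^ 9) = Tr (x ^ 27 * y) := adjoint (m := 2) (n := 3) rfl x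
  have adjoint₃ : Tr (x * y ^ 27) = Tr (x ^ 9 * y) := adjoint (m := 3) (n := 2) rfl x
  have adjoint₄ : Tr (x * d ^ 81 * y ^ 81) = Tr (d * x ^ 3 * y) := by
    have cube : (x * d ^ 81) ^ 3 = d * x ^ 3 := by
      rw [mul_pow, ← pow_mul, pow_eq_self_of_finrank_eq_five hK, mul_comm]
    rw [← cube]
    exact adjoint (m := 4) (n := 1) rfl _
  simp only [skewOperator, mul_add, mul_sub, add_mul, sub_mul, map_add, map_sub, ← mul_assoc,
    adjoint₁, adjoint₂, adjoint₃, adjoint₄]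
  ring

theorem trace_skewPfaffian_mul_eq_zero (hK : Module.finrank (ZMod 3) K = 5) {d y : K}
    (h : y ^ 6 = y + d) : Tr (skewPfaffian d * (d ^ 27 + d ^ 162)) = 0 := by
  have : CharP K 3 := charP_of_injective_algebraMap' (ZMod 3) 3
  rw [← skewOperator_eq_of_pow_six_eq (pow_eq_self_of_finrank_eq_five hK y) h,
    trace_mul_skewOperator hK,
    skewOperator_skewPfaffian (pow_eq_self_of_finrank_eq_five hK d), zero_mul, map_zero, neg_zero]

theorem trace_skewPfaffian_mul_of_pow_eleven_eq_one {d : K} (hd : d ^ 11 = 1) :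
    Tr (skewPfaffian d * (d ^ 27 + d ^ 162)) = Tr d + Tr (d ^ 2) := by
  have trace_pow (x : K) (n : ℕ) : Tr (x ^ 3 ^ n) = Tr x := by
    simpa using trace_pow_card_pow (F := ZMod 3) x n
  have reduce : skewPfaffian d * (d ^ 27 + d ^ 162)
      = d ^ 3 ^ 1 + (d ^ 2) ^ 3 ^ 1 + d ^ 2 - (d ^ 2) ^ 3 ^ 4 := by
    have pow_mod (k : ℕ) : d ^ k = d ^ (k % 11) := pow_eq_pow_mod k hd
    rw [skewPfaffian, pow_mod 30, pow_mod 27, pow_mod 162, ← pow_mul d 2 (3 ^ 4),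
      pow_mod (2 * 3 ^ 4)]
    norm_num only
    linear_combination (d ^ 2 + d ^ 3 + d ^ 5 + d ^ 6) * hd
  rw [reduce, map_sub, map_add, map_add, trace_pow, trace_pow, trace_pow]
  ring

theorem trace_add_trace_sq_ne_zero (hK : Module.finrank (ZMod 3) K = 5) {d : K}
    (hd : d ^ 11 = 1) : Tr d + Tr (d ^ 2) ≠ 0 := by
  have : CharP K 3 := charP_of_injective_algebraMap' (ZMod 3) 3
  have three_eq_zero : (3 : K) = 0 := CharP.cast_eq_zero K 3
  have algebraMap_trace (x : K) :
      algebraMap (ZMod 3) K (Tr x) = x + x ^ 3 + x ^ 9 + x ^ 27 + x ^ 81 := by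
    simp [FiniteField.algebraMap_trace_eq_sum_pow, hK, Finset.sum_range_succ]
  have geom_sum : algebraMap (ZMod 3) K (Tr d + Tr (d ^ 2)) + 1 = ∑ i ∈ Finset.range 11, d ^ i := by
    have pow_mod (k : ℕ) : d ^ k = d ^ (k % 11) := pow_eq_pow_mod k hd
    rw [map_add, algebraMap_trace, algebraMap_trace]
    simp only [← pow_mul, Finset.sum_range_succ, Finset.sum_range_zero]
    rw [pow_mod 27, pow_mod 81, pow_mod (2 * 9), pow_mod (2 * 27), pow_mod (2 * 81)]
    norm_num only
    ring
  intro h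
  have sum_eq_one : ∑ i ∈ Finset.range 11, d ^ i = 1 := by rw [← geom_sum, h, map_zero, zero_add]
  have d_eq_one : d = 1 := by
    have := geom_sum_mul d 11
    rwa [sum_eq_one, one_mul, hd, sub_self, sub_eq_zero] at this
  have eleven_eq_one : (11 : K) = 1 := by simpa [d_eq_one] using sum_eq_one
  have one_eq_zero : (1 : K) = 0 := by linear_combination eleven_eq_one - 3 * three_eq_zero
  exact one_ne_zero one_eq_zero

theorem pow_six_ne_add_of_pow_eleven_eq_one (hK : Module.finrank (ZMod 3) K = 5) {d : K}
    (hd : d ^ 11 = 1) (y : K) : y ^ 6 ≠ y + d := fun h ↦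
  trace_add_trace_sq_ne_zero hK hd <| by
    rw [← trace_skewPfaffian_mul_of_pow_eleven_eq_one hd, trace_skewPfaffian_mul_eq_zero hK h]

theorem eq_zero_of_mul_pow_add_pow_eq_sq (hK : Module.finrank (ZMod 3) K = 5) {u v : K}
    (h : u * v ^ 81 + u ^ 10 = v ^ 2) : u = 0 := by
  have : Fact (Nat.Prime 3) := ⟨Nat.prime_three⟩
  have : CharP K 3 := charP_of_injective_algebraMap' (ZMod 3) 3
  by_contra hu
  have u_pow : u ^ 242 = 1 :=
    mul_right_cancel₀ hu (by rw [← pow_succ, pow_eq_self_of_finrank_eq_five hK, one_mul])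
  have v_six : v ^ 6 = u ^ 3 * v + u ^ 30 := by
    calc v ^ 6 = (v ^ 2) ^ 3 := by ring
      _ = u ^ 3 * v ^ 243 + u ^ 30 := by rw [← h, add_pow_char]; ring
      _ = u ^ 3 * v + u ^ 30 := by rw [pow_eq_self_of_finrank_eq_five hK]
  have d_pow : ((u ^ 22)⁻¹) ^ 11 = 1 := by rw [inv_pow, ← pow_mul, u_pow, inv_one]
  -- As `6 * 49 = 49 + 3 + 242`, dividing `v_six` by `u ^ 294` gives `v / u ^ 49` coefficient `1`.
  apply pow_six_ne_add_of_pow_eleven_eq_one hK d_pow (v / u ^ 49)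
  field_simp
  linear_combination v_six - (u ^ 3 * v + u ^ 30) * u_pow

end QuinticExtension

/-- In `F_{3^5}`, for every `(ℓ₀,m₀) ≠ (0,0)` the map
`x ↦ m₀ ℓ₀^{81} x^{81} + m₀^{10} x^{9} − ℓ₀² x` is a bijection of `F_{3^5}`; i.e.
`m₀ ℓ₀^{81} X^{81} + m₀^{10} X^{9} − ℓ₀² X` is an `F_3`-linearized permutation polynomial. -/
theorem statement14 (K : Type*) [Field K] [Fintype K] (hcard : Fintype.card K = 3 ^ 5)
    (ℓ₀ m₀ : K) (hne : (ℓ₀, m₀) ≠ (0, 0)) :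
    Function.Bijective (fun x : K =>
      m₀ * ℓ₀ ^ 81 * x ^ 81 + m₀ ^ 10 * x ^ 9 - ℓ₀ ^ 2 * x) := by
  have : Fact (Nat.Prime 3) := ⟨Nat.prime_three⟩
  have : CharP K 3 := charP_of_card_eq_prime_pow hcard
  let := ZMod.algebra K 3
  have hK : Module.finrank (ZMod 3) K = 5 :=
    Nat.pow_right_injective (Nat.le_succ 2) ((FiniteField.pow_finrank_eq_card 3 K).trans hcard)
  refine Finite.injective_iff_bijective.mp fun x y hxy ↦ ?_
  by_contra hxy_ne
  have hz : x - y ≠ 0 := sub_ne_zero.mpr hxy_ne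
  have h81 : (x - y) ^ 81 = x ^ 81 - y ^ 81 := sub_pow_char_pow (p := 3) x y 4
  have h9 : (x - y) ^ 9 = x ^ 9 - y ^ 9 := sub_pow_char_pow (p := 3) x y 2
  have root : m₀ * ℓ₀ ^ 81 * (x - y) ^ 81 + m₀ ^ 10 * (x - y) ^ 9 = ℓ₀ ^ 2 * (x - y) := by
    rw [h81, h9]
    linear_combination hxy
  have hmz : m₀ * (x - y) = 0 := eq_zero_of_mul_pow_add_pow_eq_sq hK (v := ℓ₀ * (x - y)) <| by
    linear_combination (x - y) * root
  have hm : m₀ = 0 := (mul_eq_zero_iff_right hz).mp hmz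
  have hℓ : ℓ₀ = 0 := by simpa [hm, hz] using root.symm
  exact hne (by rw [hm, hℓ])
end
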